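/- arXiv:2305.04872 — 2 statements merged into one kernel-verified Lean document; each statement's English description precedes it below -/
import Mathlib

section
/- (Lemma 3.) Suppose parts (A)–(D) of Assumption 1 hold. Let ψ : Ω×X → [−∞,+∞] be ℱ⊗B_X-measurable, let Z be a nonempty at most countable subset of L(Ω;X), and let (Ω_k)_{k∈ℕ} be an increasing sequence of sets in ℱ of finite μ-measure with ⋃_{k∈ℕ} Ω_k = Ω. Define D = ⋃_{z∈Z} ⋃_{k∈ℕ} {1_A·z : A ∈ ℱ, A ⊆ Ω_k, and the closure of z(A) is compact} and ℛ = {ρ : Ω → ℝ measurable and μ-integrable : there exists x ∈ D with ψ(ω,x(ω)) ≤ ρ(ω) for μ-a.e. ω}. If ψ(ω,0) ≤ 0 for every ω ∈ Ω, then ℛ ≠ ∅ and ess inf ℛ ≤ inf_{z∈Z} ψ(·,z(·)) μ-a.e. -/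
/-!
The point is that a finite Borel measure on a Souslin space is carried, up to a null set, by
countably many compact sets (`exists_compact_seq_null_compl`). Write the space as a continuous
image `f` of the Baire space `ℕ → ℕ`. Since the outer measure of an arbitrary increasing union is
the supremum of the outer measures, one can bound the coordinates one at a time, by `b 0, b 1, …`,
losing arbitrarily little mass of the image. The set of all `x ≤ b` is compact, and, the target
being Hausdorff, its image is the intersection of the closures of the images of the sets where
only finitely many coordinates are bounded; continuity from above then gives its mass.

Applied to the image under `z ∈ Z` of `μ` restricted to `Ω_k`, this covers almost all of `Ω` by
countably many sets `Ω_k ∩ z⁻¹(K)` with `K` compact. For rational `q`, the function equal to `q` on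
`A = Ω_k ∩ z⁻¹(K) ∩ {ψ(·, z(·)) ≤ q}` and to `0` elsewhere is integrable and dominates
`ψ(·, 1_A·z)`, because `ψ(·, 0) ≤ 0`. Hence any a.e. lower bound `θ` of `ℛ` satisfies `θ ≤ q` a.e.
where `ψ(·, z(·)) ≤ q`, for every rational `q`, that is, `θ ≤ ψ(·, z(·))` a.e.
-/

open MeasureTheory Topology Set
open scoped ENNReal NNReal

noncomputable section

/-- A Hausdorff topological space is a *Souslin space* if it is the image of a Polish
space under a continuous surjection. -/
def IsSouslin (X : Type*) [TopologicalSpace X] : Prop :=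
  ∃ (P : Type) (tP : TopologicalSpace P), @PolishSpace P tP ∧
    ∃ f : P → X, @Continuous P X tP _ f ∧ Function.Surjective f

/-- The set `𝒟` of truncations `1_A·z` of mappings `z ∈ Z` by measurable sets `A ⊆ Ω_k`
on which `z` has relatively compact image. -/
def truncSet {Ω X : Type*} [MeasurableSpace Ω] [TopologicalSpace X] [Zero X]
    (Ωk : ℕ → Set Ω) (Z : Set (Ω → X)) : Set (Ω → X) :=
  {v : Ω → X | ∃ z ∈ Z, ∃ k : ℕ, ∃ A : Set Ω, MeasurableSet A ∧ A ⊆ Ωk k ∧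
    IsCompact (closure (z '' A)) ∧ v = A.indicator z}

/-- The set `ℛ` of integrable real-valued functions dominating `ψ(·, x(·))` `μ`-a.e.
for some `x ∈ 𝒟`. -/
def domSet {Ω X : Type*} [MeasurableSpace Ω] [TopologicalSpace X] [Zero X]
    (μ : Measure Ω) (ψ : Ω → X → EReal) (Ωk : ℕ → Set Ω) (Z : Set (Ω → X)) :
    Set (Ω → ℝ) :=
  {ρ : Ω → ℝ | Measurable ρ ∧ Integrable ρ μ ∧
    ∃ x ∈ truncSet Ωk Z, ∀ᵐ ω ∂μ, ψ ω (x ω) ≤ (ρ ω : EReal)}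

/-- Bounding the coordinates of the Baire space only up to `n` and letting `n → ∞`, the closures of
the images shrink to the (compact) image of the set where all coordinates are bounded. -/
lemma iInter_closure_image_subset {X : Type*} [TopologicalSpace X] [T2Space X]
    (f : (ℕ → ℕ) → X) (hf : Continuous f) (b : ℕ → ℕ) :
    ⋂ n : ℕ, closure (f '' {x | ∀ i < n, x i ≤ b i}) ⊆ f '' (Set.pi univ fun i => Iic (b i)) := by
  have hC : IsCompact (Set.pi univ fun i => Iic (b i)) :=
    isCompact_univ_pi fun i => (finite_Iic (b i)).isCompact
  intro y hy
  by_contra hyK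
  obtain ⟨U, V, hU, hV, hKU, hyV, hUV⟩ :=
    SeparatedNhds.of_isCompact_isCompact (hC.image hf) isCompact_singleton
      (disjoint_singleton_right.2 hyK)
  have h : ∀ n : ℕ, ∃ x : ℕ → ℕ, (∀ i < n, x i ≤ b i) ∧ f x ∈ V := by
    intro n
    obtain ⟨_, hv, x, hx, rfl⟩ := mem_closure_iff.1 (mem_iInter.1 hy n) V hV (hyV rfl)
    exact ⟨x, hx, hv⟩
  choose x hxb hxV using h
  -- The truncations of `x n` at `b` stay in a compact set and agree with `x n` below `n`.
  obtain ⟨a, haC, φ, hφ, hlim⟩ := hC.tendsto_subseq (x := fun n i => min (x n i) (b i))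
    (fun n i _ => min_le_right (x n i) (b i))
  have hlim' : Filter.Tendsto (fun n => x (φ n)) Filter.atTop (𝓝 a) := by
    rw [tendsto_pi_nhds] at hlim ⊢
    intro i
    refine (hlim i).congr' ?_
    filter_upwards [Filter.eventually_gt_atTop i] with n hn
    exact min_eq_left (hxb (φ n) i (hn.trans_le (hφ.id_le n)))
  have hmem : f a ∈ U := hKU ⟨a, haC, rfl⟩
  obtain ⟨n, hn⟩ := (((hf.tendsto a).comp hlim').eventually (hU.mem_nhds hmem)).exists
  exact disjoint_left.1 hUV hn (hxV (φ n))

/-- A finite Borel measure on a Hausdorff continuous image of the Baire space is tight. -/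
lemma exists_isCompact_le_measure {X : Type*} [TopologicalSpace X] [T2Space X]
    [MeasurableSpace X] [BorelSpace X] (ν : Measure X) [IsFiniteMeasure ν]
    (f : (ℕ → ℕ) → X) (hf : Continuous f) (hsurj : Function.Surjective f)
    {c : ℝ≥0∞} (hc : c < ν univ) : ∃ K : Set X, IsCompact K ∧ c ≤ ν K := by
  have step : ∀ (n : ℕ) (S : Set (ℕ → ℕ)), ∃ m : ℕ,
      c < ν (f '' S) → c < ν (f '' (S ∩ {x | x n ≤ m})) := by
    intro n S
    by_cases h : c < ν (f '' S)
    · have hmono : Monotone fun m : ℕ => f '' (S ∩ {x | x n ≤ m}) := fun m m' hm =>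
        image_mono (inter_subset_inter_right S fun x (hx : x n ≤ m) => hx.trans hm)
      have hU : f '' S = ⋃ m : ℕ, f '' (S ∩ {x | x n ≤ m}) := by
        rw [← image_iUnion, ← inter_iUnion]
        congr 1
        exact (inter_eq_left.2 fun x _ => mem_iUnion.2 ⟨x n, le_refl (x n)⟩).symm
      rw [hU, hmono.measure_iUnion] at h
      obtain ⟨m, hm⟩ := lt_iSup_iff.1 h
      exact ⟨m, fun _ => hm⟩
    · exact ⟨0, fun h' => absurd h' h⟩
  choose m hm using step
  let S : ℕ → Set (ℕ → ℕ) := fun n => Nat.rec univ (fun n S => S ∩ {x | x n ≤ m n S}) n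
  let b : ℕ → ℕ := fun n => m n (S n)
  have hSc : ∀ n, c < ν (f '' S n) := by
    intro n
    induction n with
    | zero => simpa [S, hsurj.range_eq] using hc
    | succ n ih => exact hm n (S n) ih
  have hSb : ∀ n, S n = {x | ∀ i < n, x i ≤ b i} := by
    intro n
    induction n with
    | zero => simp [S]
    | succ n ih =>
      change S n ∩ {x | x n ≤ b n} = _
      rw [ih]
      ext x
      exact Nat.forall_lt_succ_right.symm
  refine ⟨f '' (Set.pi univ fun i => Iic (b i)),
    (isCompact_univ_pi fun i => (finite_Iic (b i)).isCompact).image hf, ?_⟩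
  refine le_trans ?_ (measure_mono (iInter_closure_image_subset f hf b))
  have hanti : Antitone fun n : ℕ => closure (f '' {x | ∀ i < n, x i ≤ b i}) := fun n n' hn =>
    closure_mono (image_mono fun x hx i hi => hx i (hi.trans_le hn))
  rw [hanti.measure_iInter (fun n => isClosed_closure.measurableSet.nullMeasurableSet)
    ⟨0, measure_ne_top ν _⟩]
  refine le_iInf fun n => ?_
  rw [← hSb n]
  exact (hSc n).le.trans (measure_mono subset_closure)

/-- A finite Borel measure on a Souslin space is concentrated on a `σ`-compact set. -/
lemma exists_compact_seq_null_compl {X : Type*} [TopologicalSpace X] [T2Space X] [Nonempty X]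
    [MeasurableSpace X] [BorelSpace X] (hX : IsSouslin X) (ν : Measure X) [IsFiniteMeasure ν] :
    ∃ K : ℕ → Set X, (∀ j, IsCompact (K j)) ∧ ν (⋃ j, K j)ᶜ = 0 := by
  obtain ⟨P, tP, hP, g, hg, hgs⟩ := hX
  have : Nonempty P := (hgs (Classical.arbitrary X)).nonempty
  obtain ⟨h, hh, hhs⟩ := PolishSpace.exists_nat_nat_continuous_surjective P
  rcases eq_or_ne (ν univ) 0 with h0 | h0
  · exact ⟨fun _ => ∅, fun _ => isCompact_empty, measure_mono_null (subset_univ _) h0⟩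
  obtain ⟨u, -, hu, hlim⟩ := exists_seq_strictMono_tendsto' (bot_lt_iff_ne_bot.2 h0)
  choose K hK huK using fun n =>
    exists_isCompact_le_measure ν (g ∘ h) (hg.comp hh) (hgs.comp hhs) (hu n).2
  refine ⟨K, hK, ?_⟩
  rw [measure_compl (MeasurableSet.iUnion fun j => (hK j).measurableSet) (measure_ne_top ν _)]
  exact tsub_eq_zero_of_le
    (le_of_tendsto' hlim fun n => (huK n).trans (measure_mono (subset_iUnion K n)))

/-- **Lemma 3.**  Under parts (A)–(D) of Assumption 1, if `ψ` is a jointly measurable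
integrand with `ψ(·,0) ≤ 0`, `Z` is a nonempty at most countable set of measurable mappings,
and `(Ω_k)` is an increasing exhausting sequence of finite-measure sets, then the set `ℛ` is
nonempty and every essential infimum of `ℛ` is `μ`-a.e. below `inf_{z ∈ Z} ψ(·, z(·))`. -/
theorem domSet_nonempty_and_essInf_le
    {X : Type*} [AddCommGroup X] [Module ℝ X] [TopologicalSpace X] [T2Space X]
    [MeasurableSpace X] [BorelSpace X]
    (hSouslin : IsSouslin X)
    (hadd : Measurable fun p : X × X => p.1 + p.2)
    (hsmul : ∀ c : ℝ, Measurable fun v : X => c • v)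
    {Ω : Type*} [MeasurableSpace Ω] (μ : Measure Ω) [SigmaFinite μ]
    (hμ : μ Set.univ ≠ 0)
    (ψ : Ω → X → EReal) (hψ : Measurable (Function.uncurry ψ))
    (Z : Set (Ω → X)) (hZne : Z.Nonempty) (hZct : Z.Countable)
    (hZmeas : ∀ z ∈ Z, Measurable z)
    (Ωk : ℕ → Set Ω) (hmono : Monotone Ωk) (hΩkmeas : ∀ k, MeasurableSet (Ωk k))
    (hΩkfin : ∀ k, μ (Ωk k) < ⊤) (hcover : (⋃ k, Ωk k) = Set.univ)
    (hψ0 : ∀ ω, ψ ω 0 ≤ 0) :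
    (domSet μ ψ Ωk Z).Nonempty ∧
    ∀ θ : Ω → EReal, Measurable θ →
      (∀ ϑ : Ω → EReal, Measurable ϑ →
        ((∀ ρ ∈ domSet μ ψ Ωk Z, ∀ᵐ ω ∂μ, ϑ ω ≤ (ρ ω : EReal)) ↔
          ∀ᵐ ω ∂μ, ϑ ω ≤ θ ω)) →
      ∀ᵐ ω ∂μ, θ ω ≤ ⨅ z : Z, ψ ω ((z : Ω → X) ω) := by
  refine ⟨?_, ?_⟩
  · obtain ⟨z, hz⟩ := hZne
    refine ⟨0, measurable_const, integrable_zero _ _ _, (∅ : Set Ω).indicator z,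
      ⟨z, hz, 0, ∅, MeasurableSet.empty, empty_subset _, by simp, rfl⟩, ?_⟩
    exact Filter.Eventually.of_forall fun ω => by simpa using hψ0 ω
  intro θ hθ hθinf
  have hlow := (hθinf θ hθ).2 (Filter.Eventually.of_forall fun ω => le_rfl)
  have : Countable Z := hZct.to_subtype
  suffices H : ∀ z : Z, ∀ᵐ ω ∂μ, θ ω ≤ ψ ω ((z : Ω → X) ω) by
    filter_upwards [ae_all_iff.2 H] with ω hω
    exact le_iInf hω
  rintro ⟨z, hz⟩
  have hzm := hZmeas z hz
  have hψz : Measurable fun ω => ψ ω (z ω) := hψ.comp (measurable_id.prodMk hzm)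
  have hcomp : ∀ k : ℕ, ∃ K : ℕ → Set X, (∀ j, IsCompact (K j)) ∧
      ∀ᵐ ω ∂μ, ω ∈ Ωk k → ∃ j, z ω ∈ K j := by
    intro k
    have : IsFiniteMeasure (μ.restrict (Ωk k)) := ⟨by simpa using hΩkfin k⟩
    obtain ⟨K, hK, hnull⟩ :=
      exists_compact_seq_null_compl hSouslin ((μ.restrict (Ωk k)).map z)
    refine ⟨K, hK, (ae_restrict_iff' (hΩkmeas k)).1 ?_⟩
    have hae : ∀ᵐ v ∂(μ.restrict (Ωk k)).map z, v ∈ ⋃ j, K j := hnull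
    filter_upwards [ae_of_ae_map hzm.aemeasurable hae] with ω hω
    exact mem_iUnion.1 hω
  choose K hK hKae using hcomp
  have hq : ∀ (k j : ℕ) (q : ℚ), ∀ᵐ ω ∂μ, ω ∈ Ωk k → z ω ∈ K k j →
      ψ ω (z ω) ≤ ((q : ℝ) : EReal) → θ ω ≤ ((q : ℝ) : EReal) := by
    intro k j q
    let A : Set Ω := (Ωk k ∩ z ⁻¹' K k j) ∩ {ω | ψ ω (z ω) ≤ ((q : ℝ) : EReal)}
    have hA : MeasurableSet A := ((hΩkmeas k).inter (hzm (hK k j).measurableSet)).inter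
      (measurableSet_le hψz measurable_const)
    have hAk : A ⊆ Ωk k := fun ω hω => hω.1.1
    have hcl : IsCompact (closure (z '' A)) :=
      (hK k j).closure_of_subset (image_subset_iff.2 fun ω hω => hω.1.2)
    have hρ : A.indicator (fun _ => (q : ℝ)) ∈ domSet μ ψ Ωk Z := by
      refine ⟨measurable_const.indicator hA, ?_, A.indicator z,
        ⟨z, hz, k, A, hA, hAk, hcl, rfl⟩, Filter.Eventually.of_forall fun ω => ?_⟩
      · exact (integrable_indicator_iff hA).2
          (integrableOn_const ((measure_mono hAk).trans_lt (hΩkfin k)).ne)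
      · by_cases hω : ω ∈ A
        · rw [indicator_of_mem hω, indicator_of_mem hω]
          exact hω.2
        · simpa only [indicator_of_notMem hω, EReal.coe_zero] using hψ0 ω
    filter_upwards [hlow _ hρ] with ω hω h1 h2 h3
    have hmem : ω ∈ A := ⟨⟨h1, h2⟩, h3⟩
    simpa only [indicator_of_mem hmem] using hω
  filter_upwards [ae_all_iff.2 hKae,
    ae_all_iff.2 fun k => ae_all_iff.2 fun j => ae_all_iff.2 (hq k j)] with ω h1 h2
  obtain ⟨k, hk⟩ := mem_iUnion.1 (hcover ▸ mem_univ ω)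
  obtain ⟨j, hj⟩ := h1 k hk
  by_contra! hlt
  obtain ⟨q, hq1, hq2⟩ := EReal.exists_rat_btwn_of_lt hlt
  exact absurd (h2 k j q hk hj hq1.le) (not_le.2 hq2)
end
end

section
/- (Proposition 6.) Let X be a locally convex real topological vector space which is a Souslin space, let Y be a separable locally convex real topological vector space, and let ⟨·,·⟩ : X×Y → ℝ be a bilinear form placing X and Y in separating duality (⟨x,·⟩ = 0 implies x = 0, and ⟨·,y⟩ = 0 implies y = 0) such that the topologies are compatible with the pairing: the continuous linear functionals on X are exactly the maps ⟨·,y⟩ for y ∈ Y, and the continuous linear functionals on Y are exactly the maps ⟨x,·⟩ for x ∈ X. Let (Ω,ℱ) be a measurable space and let φ : Ω×X → (−∞,+∞] be a normal integrand. Define φ* : Ω×Y → [−∞,+∞] by φ*(ω,y) = sup_{x∈X} (⟨x,y⟩ − φ(ω,x)). Then φ* is ℱ⊗B_Y-measurable. -/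
/-!
The supremum defining `φ*(ω,y)` is the supremum of the function `(v,r) ↦ ⟨v,y⟩ - r` over
`epi φ(ω,·)`. This function is continuous, so its supremum over the epigraph equals its
supremum over any subset with the same closure, and
`φ*(ω,y) = sup_n (⟨xₙ(ω),y⟩ - ρₙ(ω))`.

What remains is that the pairing is `B_X ⊗ B_Y`-measurable although it is only separately
continuous and neither space need be metrizable. A Souslin space has a countable network:
the images `Nᵢ` of a countable base of the Polish space. Hence `⟨x,y⟩ > a` holds iff for some
`i` and some rational `b > a` one has `x ∈ closure Nᵢ` and `⟨z,y⟩ ≥ b` for all `z ∈ Nᵢ`. For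
fixed `i` and `b` this describes a product of two closed sets, and there are countably many
pairs `(i, b)`.
-/

open MeasureTheory Topology Set
open scoped ENNReal NNReal

noncomputable section

/-- The epigraph of an extended-real-valued function. -/
def epi {X : Type*} (f : X → EReal) : Set (X × ℝ) :=
  {p : X × ℝ | f p.1 ≤ (p.2 : EReal)}

/-- A jointly measurable integrand `φ` on `Ω × X` is a *normal integrand* if there are
sequences of measurable mappings `(xₙ)` and measurable real functions `(ρₙ)` such that for
every `ω`, `(xₙ(ω),ρₙ(ω))` lies in `epi φ(ω,·)` and the closure of `epi φ(ω,·)` equals the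
closure of `{(xₙ(ω),ρₙ(ω)) : n ∈ ℕ}`. -/
def NormalIntegrand {Ω X : Type*} [MeasurableSpace Ω] [TopologicalSpace X]
    [MeasurableSpace X] (φ : Ω → X → EReal) : Prop :=
  Measurable (Function.uncurry φ) ∧
  ∃ (x : ℕ → Ω → X) (ρ : ℕ → Ω → ℝ),
    (∀ n, Measurable (x n)) ∧ (∀ n, Measurable (ρ n)) ∧
    ∀ ω, (∀ n, (x n ω, ρ n ω) ∈ epi (φ ω)) ∧
      closure (epi (φ ω)) = closure {p : X × ℝ | ∃ n, p = (x n ω, ρ n ω)}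

/-- A separately continuous real function on `X × Y` with `X` Souslin is measurable for the
product of the Borel σ-algebras, for an arbitrary topological space `Y`. -/
theorem IsSouslin.measurable_of_separately_continuous {X Y : Type*}
    [TopologicalSpace X] [MeasurableSpace X] [BorelSpace X]
    [TopologicalSpace Y] [MeasurableSpace Y] [BorelSpace Y]
    (hX : IsSouslin X) (g : X → Y → ℝ)
    (hgX : ∀ y, Continuous fun x => g x y) (hgY : ∀ x, Continuous (g x)) :
    Measurable fun p : X × Y => g p.1 p.2 := by
  obtain ⟨P, tP, hP, f, hf, hsurj⟩ := hX
  let 𝓑 := TopologicalSpace.countableBasis P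
  refine measurable_of_Ioi fun a => ?_
  have hset : (fun p : X × Y => g p.1 p.2) ⁻¹' Ioi a =
      ⋃ U ∈ 𝓑, ⋃ b : ℚ, ⋃ _ : a < b,
        closure (f '' U) ×ˢ {y | ∀ z ∈ f '' U, (b : ℝ) ≤ g z y} := by
    ext ⟨x, y⟩
    simp only [mem_preimage, mem_Ioi, mem_iUnion, mem_prod, mem_ofPred_eq, exists_prop]
    constructor
    · intro hxy
      obtain ⟨b, hab, hb⟩ := exists_rat_btwn hxy
      obtain ⟨p, rfl⟩ := hsurj x
      obtain ⟨U, hU, hpU, hsub⟩ :=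
        (TopologicalSpace.isBasis_countableBasis P).exists_subset_of_mem_open
          (show p ∈ (fun q => g (f q) y) ⁻¹' Ioi (b : ℝ) from hb)
          (isOpen_Ioi.preimage ((hgX y).comp hf))
      refine ⟨U, hU, b, hab, subset_closure ⟨p, hpU, rfl⟩, ?_⟩
      rintro _ ⟨q, hq, rfl⟩
      exact le_of_lt (hsub hq)
    · rintro ⟨U, -, b, hab, hx, hy⟩
      have hcl : IsClosed {z | (b : ℝ) ≤ g z y} := isClosed_le continuous_const (hgX y)
      exact hab.trans_le (closure_minimal hy hcl hx)
  rw [hset]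
  refine MeasurableSet.biUnion (TopologicalSpace.countable_countableBasis P) fun U _ =>
    MeasurableSet.iUnion fun b => MeasurableSet.iUnion fun _ =>
      isClosed_closure.measurableSet.prod (IsClosed.measurableSet ?_)
  simp only [ofPred_forall]
  exact isClosed_iInter fun z => isClosed_iInter fun _ =>
    isClosed_le continuous_const (hgY z)

/-- **Proposition 6.**  In the duality setting of Assumption 2, if `φ : Ω × X → (−∞,+∞]`
is a normal integrand, then its pointwise Legendre conjugate
`φ*(ω,y) = sup_{x ∈ X} (⟨x,y⟩ − φ(ω,x))` is `ℱ ⊗ B_Y`-measurable. -/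
theorem conjugate_integrand_measurable
    {X : Type*} [AddCommGroup X] [Module ℝ X] [TopologicalSpace X] [T2Space X]
    [ContinuousAdd X] [ContinuousSMul ℝ X] [LocallyConvexSpace ℝ X]
    [MeasurableSpace X] [BorelSpace X]
    (hXSouslin : IsSouslin X)
    {Y : Type*} [AddCommGroup Y] [Module ℝ Y] [TopologicalSpace Y]
    [ContinuousAdd Y] [ContinuousSMul ℝ Y] [LocallyConvexSpace ℝ Y]
    [TopologicalSpace.SeparableSpace Y]
    [MeasurableSpace Y] [BorelSpace Y]
    (B : X →ₗ[ℝ] Y →ₗ[ℝ] ℝ)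
    (hsepX : ∀ x : X, (∀ y : Y, B x y = 0) → x = 0)
    (hsepY : ∀ y : Y, (∀ x : X, B x y = 0) → y = 0)
    (hcontX : ∀ y : Y, Continuous fun x : X => B x y)
    (hdualX : ∀ f : X →ₗ[ℝ] ℝ, Continuous f → ∃ y : Y, ∀ x : X, f x = B x y)
    (hcontY : ∀ x : X, Continuous fun y : Y => B x y)
    (hdualY : ∀ g : Y →ₗ[ℝ] ℝ, Continuous g → ∃ x : X, ∀ y : Y, g y = B x y)
    {Ω : Type*} [MeasurableSpace Ω]
    (φ : Ω → X → EReal) (hbot : ∀ ω v, φ ω v ≠ ⊥)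
    (hφ : NormalIntegrand φ) :
    Measurable fun p : Ω × Y => ⨆ v : X, ((B v p.2 : ℝ) : EReal) - φ p.1 v := by
  obtain ⟨-, x, ρ, hx, hρ, hepi⟩ := hφ
  have hB : Measurable fun p : X × Y => B p.1 p.2 :=
    hXSouslin.measurable_of_separately_continuous (fun v y => B v y) hcontX hcontY
  have key : (fun p : Ω × Y => ⨆ v : X, ((B v p.2 : ℝ) : EReal) - φ p.1 v) =
      fun p : Ω × Y => ⨆ n, ((B (x n p.1) p.2 - ρ n p.1 : ℝ) : EReal) := by
    funext ⟨ω, y⟩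
    obtain ⟨hmem, hcl⟩ := hepi ω
    apply le_antisymm
    · refine iSup_le fun v => ?_
      by_cases htop : φ ω v = ⊤
      · simp [htop]
      obtain ⟨r, hr⟩ : ∃ r : ℝ, (r : EReal) = φ ω v :=
        ⟨_, EReal.coe_toReal htop (hbot ω v)⟩
      have hclosed : IsClosed {q : X × ℝ |
          ((B q.1 y - q.2 : ℝ) : EReal) ≤ ⨆ n, ((B (x n ω) y - ρ n ω : ℝ) : EReal)} := by
        refine isClosed_le (continuous_coe_real_ereal.comp ?_) continuous_const
        exact ((hcontX y).comp continuous_fst).sub continuous_snd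
      have hvr : (v, r) ∈ closure {q : X × ℝ | ∃ n, q = (x n ω, ρ n ω)} :=
        hcl ▸ subset_closure (show φ ω v ≤ (r : EReal) from hr.ge)
      have hle := closure_minimal (by
        rintro _ ⟨n, rfl⟩
        exact le_iSup (fun n => ((B (x n ω) y - ρ n ω : ℝ) : EReal)) n) hclosed hvr
      rw [← hr, ← EReal.coe_sub]
      exact hle
    · refine iSup_le fun n => le_iSup_of_le (x n ω) ?_
      rw [EReal.coe_sub]
      exact EReal.sub_le_sub le_rfl (hmem n)
  rw [key]
  refine Measurable.iSup fun n => Measurable.coe_real_ereal ?_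
  exact (hB.comp (((hx n).comp measurable_fst).prodMk measurable_snd)).sub
    ((hρ n).comp measurable_fst)
end
end
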